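/- Let f : ℝⁿ → ℝⁿ be a C¹ cooperative irreducible vector field admitting a C¹ first integral H : ℝⁿ → ℝ such that for some constants 0 < m ≤ M one has m ≤ ∂H/∂xᵢ(x) ≤ M for all i and all x ∈ ℝⁿ. Then every maximal solution of ẋ = f(x) is defined on all of [0,∞), and exactly one of the following holds: (a) for every x ∈ ℝⁿ the ω-limit set of the maximal solution starting at x is a singleton, and moreover any two distinct zeros of f are related by ≪; or (b) for every x ∈ ℝⁿ the ω-limit set of the maximal solution starting at x is empty. -/

import Mathlib

open Set Filter Topology

noncomputable section

/-- `f` is a cooperative vector field on `X`: the off-diagonal entries of the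
Jacobian are nonnegative. -/
def coopVF {n : ℕ} (f : (Fin n → ℝ) → (Fin n → ℝ)) (X : Set (Fin n → ℝ)) : Prop :=
  ∀ x ∈ X, ∀ i j : Fin n, i ≠ j → 0 ≤ fderiv ℝ f x (Pi.single j 1) i

/-- The Jacobian matrix of `f` at `x`. -/
def jacMat {n : ℕ} (f : (Fin n → ℝ) → (Fin n → ℝ)) (x : Fin n → ℝ) :
    Fin n → Fin n → ℝ :=
  fun i j => fderiv ℝ f x (Pi.single j 1) i

/-- A matrix is irreducible if for every nonempty proper subset `S` of indices there
are `i ∈ S`, `j ∉ S` with `A i j ≠ 0`. -/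
def matIrred {n : ℕ} (A : Fin n → Fin n → ℝ) : Prop :=
  ∀ S : Set (Fin n), S.Nonempty → S ≠ Set.univ → ∃ i ∈ S, ∃ j ∉ S, A i j ≠ 0

/-- `X` is p-convex: the segment joining any two order-related points of `X` lies in `X`. -/
def pconvex {n : ℕ} (X : Set (Fin n → ℝ)) : Prop :=
  ∀ x ∈ X, ∀ y ∈ X, x < y → segment ℝ x y ⊆ X

/-- `x ≪ y`: strict inequality in every coordinate. -/
def strLt {n : ℕ} (x y : Fin n → ℝ) : Prop := ∀ i, x i < y i

/-- `γ` is a solution of `ẋ = f(x)` on the time interval `I`, with values in `X`. -/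
def IsSolOn {n : ℕ} (f : (Fin n → ℝ) → (Fin n → ℝ)) (X : Set (Fin n → ℝ))
    (I : Set ℝ) (γ : ℝ → Fin n → ℝ) : Prop :=
  (∀ t ∈ I, γ t ∈ X) ∧ (∀ t ∈ I, HasDerivWithinAt γ (f (γ t)) I t)

/-- The ω-limit set (within `X`) of a curve `γ`. -/
def omegaSet {n : ℕ} (X : Set (Fin n → ℝ)) (γ : ℝ → Fin n → ℝ) :
    Set (Fin n → ℝ) :=
  {y | y ∈ X ∧ ∃ t : ℕ → ℝ, Tendsto t atTop atTop ∧
    Tendsto (fun k => γ (t k)) atTop (𝓝 y)}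

/-- The α-limit set (within `X`) of a curve `γ`. -/
def alphaSet {n : ℕ} (X : Set (Fin n → ℝ)) (γ : ℝ → Fin n → ℝ) :
    Set (Fin n → ℝ) :=
  {y | y ∈ X ∧ ∃ t : ℕ → ℝ, Tendsto t atTop atBot ∧
    Tendsto (fun k => γ (t k)) atTop (𝓝 y)}

/-- The Euclidean norm on `Fin n → ℝ`. -/
def eunorm {n : ℕ} (v : Fin n → ℝ) : ℝ := Real.sqrt (∑ i, (v i) ^ 2)

/-- `X` is order-convex: it contains the order interval of any two of its points. -/
def orderConvex {n : ℕ} (X : Set (Fin n → ℝ)) : Prop :=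
  ∀ x ∈ X, ∀ y ∈ X, x ≤ y → Set.Icc x y ⊆ X

/-!
Measure the separation of two states by the increment of `H` across the order interval which they
span, `H (x ⊔ y) - H (x ⊓ y)`. Along two solutions it never increases: by comparison the solutions
issued from `x ⊔ y` and `x ⊓ y` keep enclosing the other two, and `H` is constant along them. If `f`
is irreducible, a solution starting below another one is immediately below it in every coordinate,
so the separation can remain constant only if the two states are comparable.

Comparing a solution with its translates in time bounds its displacement on bounded time intervals,
hence solutions exist for all positive times. Along the orbit of an ω-limit point the separation of
a state from its translates is constant, being a limit of a monotone function. The point is thus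
comparable with its whole forward orbit, on which `H` is constant: it is an equilibrium, and since
the separation of the solution from it does not increase, the solution converges to it.
Finally, a single equilibrium keeps every solution bounded, so either every solution converges or
there is no equilibrium, hence no ω-limit point at all.
-/

open scoped NNReal

section IntegralCurve

variable {E : Type*} [NormedAddCommGroup E] [NormedSpace ℝ E] {f : E → E} {γ δ : ℝ → E}

theorem isIntegralCurveOn_const {p : E} (hp : f p = 0) (I : Set ℝ) :
    IsIntegralCurveOn (fun _ => p) (fun _ => f) I :=
  (isIntegralCurve_const (v := fun _ => f) fun _ => hp).isIntegralCurveOn I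

theorem isIntegralCurveOn_comp_add_of_mapsTo {I J : Set ℝ} {r : ℝ}
    (hγ : IsIntegralCurveOn γ (fun _ => f) I) (hr : MapsTo (· + r) J I) :
    IsIntegralCurveOn (fun t => γ (t + r)) (fun _ => f) J := by
  refine (hγ.comp_add r).mono fun t ht => ?_
  simpa [mem_vadd_set_iff_neg_vadd_mem, add_comm] using hr ht

theorem isIntegralCurveOn_union {v : ℝ → E → E} {A B : Set ℝ} (hA : IsClosed A) (hB : IsClosed B)
    (hγA : IsIntegralCurveOn γ v A) (hγB : IsIntegralCurveOn γ v B) :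
    IsIntegralCurveOn γ v (A ∪ B) := by
  have within {C : Set ℝ} (hC : IsClosed C) (hγC : IsIntegralCurveOn γ v C) (t : ℝ) :
      HasDerivWithinAt γ (v t (γ t)) C t := by
    by_cases ht : t ∈ C
    · exact hγC t ht
    · exact hasDerivWithinAt_iff_hasFDerivWithinAt.2
        (.of_notMem_closure (hC.closure_eq.symm ▸ ht))
  exact fun t _ => (within hA hγA t).union (within hB hγB t)

theorem isIntegralCurveOn_congr {v : ℝ → E → E} {I : Set ℝ} (hγ : IsIntegralCurveOn γ v I)
    (h : EqOn δ γ I) : IsIntegralCurveOn δ v I := fun t ht => by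
  simpa only [h ht] using (hγ t ht).congr h (h ht)

theorem exists_isIntegralCurveOn_Icc_extension {v : ℝ → E → E} {a b c : ℝ} (hab : a ≤ b)
    (hbc : b ≤ c) (hγ : IsIntegralCurveOn γ v (Icc a b)) (hδ : IsIntegralCurveOn δ v (Icc b c))
    (h : γ b = δ b) : ∃ η, EqOn η γ (Icc a b) ∧ IsIntegralCurveOn η v (Icc a c) := by
  have hηγ : EqOn ((Iic b).piecewise γ δ) γ (Icc a b) := fun t ht => piecewise_eq_of_mem _ _ _ ht.2
  have hηδ : EqOn ((Iic b).piecewise γ δ) δ (Icc b c) := fun t ht => by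
    rcases ht.1.eq_or_lt with rfl | hbt
    · rw [piecewise_eq_of_mem _ _ _ self_mem_Iic, h]
    · exact piecewise_eq_of_notMem _ _ _ hbt.not_ge
  refine ⟨_, hηγ, ?_⟩
  rw [← Icc_union_Icc_eq_Icc hab hbc]
  exact isIntegralCurveOn_union isClosed_Icc isClosed_Icc
    (isIntegralCurveOn_congr hγ hηγ) (isIntegralCurveOn_congr hδ hηδ)

theorem eqOn_Icc_of_isIntegralCurveOn (hf : LocallyLipschitz f) {a b : ℝ}
    (hγ : IsIntegralCurveOn γ (fun _ => f) (Icc a b))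
    (hδ : IsIntegralCurveOn δ (fun _ => f) (Icc a b)) (h : γ a = δ a) :
    EqOn γ δ (Icc a b) := by
  have right {η : ℝ → E} (hη : IsIntegralCurveOn η (fun _ => f) (Icc a b)) (t : ℝ)
      (ht : t ∈ Ico a b) : HasDerivWithinAt η (f (η t)) (Ici t) t :=
    (hη t (Ico_subset_Icc_self ht)).mono_of_mem_nhdsWithin (Icc_mem_nhdsGE_of_mem ht)
  obtain ⟨K, hK⟩ := hf.locallyLipschitzOn.exists_lipschitzOnWith_of_compact
    ((isCompact_Icc.image_of_continuousOn hγ.continuousOn).union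
      (isCompact_Icc.image_of_continuousOn hδ.continuousOn))
  exact ODE_solution_unique_of_mem_Icc_right (v := fun _ => f) (fun _ _ => hK)
    hγ.continuousOn (right hγ)
    (fun t ht => .inl (mem_image_of_mem γ (Ico_subset_Icc_self ht)))
    hδ.continuousOn (right hδ)
    (fun t ht => .inr (mem_image_of_mem δ (Ico_subset_Icc_self ht))) h

theorem exists_pos_forall_exists_isIntegralCurveOn_Icc [ProperSpace E]
    (hf : LocallyLipschitz f) (R : ℝ) :
    ∃ ε > 0, ∀ (a : ℝ) (x : E), ‖x‖ ≤ R →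
      ∃ γ, γ a = x ∧ IsIntegralCurveOn γ (fun _ => f) (Icc a (a + ε)) := by
  obtain ⟨K, hK⟩ := hf.locallyLipschitzOn.exists_lipschitzOnWith_of_compact
    (isCompact_closedBall (0 : E) (R + 1))
  obtain ⟨L, hL⟩ := (isCompact_closedBall (0 : E) (R + 1)).exists_bound_of_continuousOn
    hf.continuous.continuousOn
  set ε : ℝ := 1 / (L.toNNReal + 1)
  have hε : 0 < ε := by positivity
  refine ⟨ε, hε, fun a x hx => ?_⟩
  have hball : Metric.closedBall x (1 : ℝ≥0) ⊆ Metric.closedBall 0 (R + 1) :=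
    Metric.closedBall_subset_closedBall' (by simpa [add_comm] using hx)
  have hspeed : L.toNNReal * ε ≤ 1 := by
    rw [mul_one_div, div_le_one₀ (by positivity)]
    exact le_add_of_nonneg_right zero_le_one
  have hpicard : IsPicardLindelof (fun _ => f)
      (⟨a, left_mem_Icc.2 (le_add_of_nonneg_right hε.le)⟩ : Icc a (a + ε)) x 1 0 L.toNNReal K :=
    .of_time_independent (fun y hy => (hL y (hball hy)).trans (Real.le_coe_toNNReal L))
      (hK.mono hball) (by simpa [hε.le] using hspeed)
  exact hpicard.exists_eq_forall_mem_Icc_hasDerivWithinAt₀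

theorem exists_pair_isIntegralCurveOn_Icc [ProperSpace E] (hf : LocallyLipschitz f) {s t : ℝ}
    (hst : s < t) (x y : E) : ∃ r ∈ Ioc s t, ∃ γ δ, γ s = x ∧ δ s = y ∧
      IsIntegralCurveOn γ (fun _ => f) (Icc s r) ∧ IsIntegralCurveOn δ (fun _ => f) (Icc s r) := by
  obtain ⟨ε, hε, hlocal⟩ := exists_pos_forall_exists_isIntegralCurveOn_Icc hf (max ‖x‖ ‖y‖)
  obtain ⟨γ, hγ0, hγ⟩ := hlocal s x (le_max_left _ _)
  obtain ⟨δ, hδ0, hδ⟩ := hlocal s y (le_max_right _ _)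
  exact ⟨min (s + ε) t, ⟨lt_min (lt_add_of_pos_right s hε) hst, min_le_right _ _⟩, γ, δ, hγ0, hδ0,
    hγ.mono (Icc_subset_Icc_right (min_le_left _ _)),
    hδ.mono (Icc_subset_Icc_right (min_le_left _ _))⟩

theorem exists_isIntegralCurveOn_Icc_of_forall_norm_le [ProperSpace E]
    (hf : LocallyLipschitz f) {x : E} {R T : ℝ}
    (hR : ∀ t ∈ Icc 0 T, ∀ γ, γ 0 = x → IsIntegralCurveOn γ (fun _ => f) (Icc 0 t) → ‖γ t‖ ≤ R)
    (hT : 0 ≤ T) :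
    ∃ γ, γ 0 = x ∧ IsIntegralCurveOn γ (fun _ => f) (Icc 0 T) := by
  obtain ⟨ε, hε, hlocal⟩ := exists_pos_forall_exists_isIntegralCurveOn_Icc hf R
  have steps (k : ℕ) : ∃ γ, γ 0 = x ∧ IsIntegralCurveOn γ (fun _ => f) (Icc 0 (min (k * ε) T)) := by
    induction k with
    | zero =>
      refine ⟨fun _ => x, rfl, ?_⟩
      simp [hT, IsIntegralCurveOn, hasDerivWithinAt_iff_hasFDerivWithinAt]
    | succ k ih =>
      obtain ⟨γ, hγ0, hγ⟩ := ih
      have hmem : min (k * ε) T ∈ Icc 0 T := ⟨le_min (by positivity) hT, min_le_right _ _⟩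
      obtain ⟨δ, hδ0, hδ⟩ := hlocal (min (k * ε) T) _ (hR _ hmem γ hγ0 hγ)
      obtain ⟨η, hηγ, hη⟩ := exists_isIntegralCurveOn_Icc_extension hmem.1
        (le_add_of_nonneg_right hε.le) hγ hδ hδ0.symm
      refine ⟨η, (hηγ (left_mem_Icc.2 hmem.1)).trans hγ0, hη.mono (Icc_subset_Icc_right ?_)⟩
      rw [← min_add_add_right, Nat.cast_succ, add_one_mul]
      exact min_le_min_left _ (le_add_of_nonneg_right hε.le)
  obtain ⟨k, hk⟩ := exists_nat_ge (T / ε)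
  simpa only [min_eq_right ((div_le_iff₀ hε).1 hk)] using steps k

theorem exists_isIntegralCurveOn_Ici_of_forall_Icc (hf : LocallyLipschitz f) {x : E}
    (h : ∀ T, 0 ≤ T → ∃ γ, γ 0 = x ∧ IsIntegralCurveOn γ (fun _ => f) (Icc 0 T)) :
    ∃ γ, γ 0 = x ∧ IsIntegralCurveOn γ (fun _ => f) (Ici 0) := by
  choose! γ hγ0 hγ using h
  have hagree {S T : ℝ} (hS : 0 ≤ S) (hST : S ≤ T) : EqOn (γ S) (γ T) (Icc 0 S) :=
    eqOn_Icc_of_isIntegralCurveOn hf (hγ S hS)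
      ((hγ T (hS.trans hST)).mono (Icc_subset_Icc_right hST))
      (by rw [hγ0 S hS, hγ0 T (hS.trans hST)])
  refine ⟨fun t => γ t t, hγ0 0 le_rfl, fun t (ht : 0 ≤ t) => ?_⟩
  have hT : (0 : ℝ) ≤ t + 1 := by linarith
  have hdiag : EqOn (fun s => γ s s) (γ (t + 1)) (Icc 0 (t + 1)) :=
    fun s hs => hagree hs.1 hs.2 (right_mem_Icc.2 hs.1)
  exact (isIntegralCurveOn_congr (hγ _ hT) hdiag t ⟨ht, by linarith⟩).mono_of_mem_nhdsWithin
    (inter_mem_nhdsWithin _ (Iic_mem_nhds (lt_add_one t)))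

end IntegralCurve

section Order

variable {ι : Type*} [Fintype ι]

instance instHasSolidNormPi : HasSolidNorm (ι → ℝ) where
  solid _ y hxy := (pi_norm_le_iff_of_nonneg (norm_nonneg y)).2 fun i =>
    (hxy i).trans (norm_le_pi_norm y i)

/-- A vector field on `ι → ℝ` is quasimonotone (the Kamke condition) if each component is
nondecreasing in all the other coordinates. -/
def Quasimonotone (f : (ι → ℝ) → ι → ℝ) : Prop :=
  ∀ ⦃x y⦄, x ≤ y → ∀ ⦃i⦄, x i = y i → f x i ≤ f y i

/-- The substitute for irreducibility in the absence of derivatives: two comparable points which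
differ, but agree in some coordinate, are pushed apart by the field in one of the coordinates in
which they agree. -/
def StrictQuasimonotone (f : (ι → ℝ) → ι → ℝ) : Prop :=
  ∀ ⦃x y⦄, x < y → (∃ i, x i = y i) → ∃ i, x i = y i ∧ f x i < f y i

variable {f : (ι → ℝ) → ι → ℝ} {a b l u : ℝ → ι → ℝ} {s t : ℝ}

theorem Quasimonotone.sub_apply_le (hq : Quasimonotone f) {K : ℝ≥0} {A : Set (ι → ℝ)}
    (hf : LipschitzOnWith K f A) {x y : ι → ℝ} {r : ℝ} (hr : 0 ≤ r) (hy : y ∈ A)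
    (hyr : y + (fun _ => r) ∈ A) (hxy : x ≤ y + fun _ => r) {i : ι} (hi : x i = y i + r) :
    f x i - f y i ≤ K * r := by
  calc f x i - f y i ≤ (f (y + fun _ => r) - f y) i := sub_le_sub_right (hq hxy hi) _
    _ ≤ ‖f (y + fun _ => r) - f y‖ :=
      (le_abs_self _).trans (norm_le_pi_norm (f (y + fun _ => r) - f y) i)
    _ ≤ K * ‖y + (fun _ => r) - y‖ := hf.norm_sub_le hyr hy
    _ ≤ K * r := by
      rw [add_sub_cancel_left]
      gcongr
      exact (pi_norm_const_le r).trans (abs_of_nonneg hr).le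

theorem apply_le_norm_posPart (w : ι → ℝ) (i : ι) : w i ≤ ‖w⁺‖ :=
  (le_posPart (w i)).trans ((le_abs_self _).trans (norm_le_pi_norm w⁺ i))

/-- Only the coordinates in which the sup norm is attained matter for its growth. -/
theorem eventually_norm_posPart_lt {w : ℝ → ι → ℝ} {w' : ι → ℝ} {r : ℝ}
    (hw : HasDerivWithinAt w w' (Ioi t) t) (hr : 0 < r)
    (hw' : ∀ i, w t i = ‖(w t)⁺‖ → w' i < r) :
    ∀ᶠ z in 𝓝[>] t, ‖(w z)⁺‖ < ‖(w t)⁺‖ + r * (z - t) := by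
  have hcoord (i : ι) : ∀ᶠ z in 𝓝[>] t, w z i < ‖(w t)⁺‖ + r * (z - t) := by
    rcases (apply_le_norm_posPart (w t) i).eq_or_lt with heq | hlt
    · filter_upwards [(hasDerivWithinAt_pi.1 hw i).limsup_slope_le' self_notMem_Ioi (hw' i heq),
        self_mem_nhdsWithin] with z hz hzt
      rw [slope_def_field, div_lt_iff₀ (sub_pos.2 hzt)] at hz
      linarith
    · have hcont : ContinuousWithinAt (fun z => ‖(w t)⁺‖ + r * (z - t) - w z i) (Ioi t) t :=
        (by fun_prop : Continuous fun z => ‖(w t)⁺‖ + r * (z - t)).continuousWithinAt.sub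
          (hasDerivWithinAt_pi.1 hw i).continuousWithinAt
      filter_upwards [hcont.eventually (lt_mem_nhds (a := 0) (by simpa using hlt))] with z hz
      exact sub_pos.1 hz
  filter_upwards [eventually_all.2 hcoord, self_mem_nhdsWithin] with z hz hzt
  have hpos : 0 < ‖(w t)⁺‖ + r * (z - t) :=
    add_pos_of_nonneg_of_pos (norm_nonneg _) (mul_pos hr (sub_pos.2 hzt))
  refine (pi_norm_lt_iff hpos).2 fun i => ?_
  rw [Pi.posPart_apply, Real.norm_of_nonneg (posPart_nonneg _)]
  exact max_lt (hz i) hpos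

theorem Quasimonotone.eventually_slope_norm_posPart_sub_lt (hq : Quasimonotone f) {K : ℝ≥0}
    {A : Set (ι → ℝ)} (hf : LipschitzOnWith K f A)
    (ha : HasDerivWithinAt a (f (a t)) (Ioi t) t) (hb : HasDerivWithinAt b (f (b t)) (Ioi t) t)
    (hbA : b t ∈ A) (hbA' : b t + (fun _ => ‖(a t - b t)⁺‖) ∈ A) {r : ℝ}
    (hr : K * ‖(a t - b t)⁺‖ < r) :
    ∀ᶠ z in 𝓝[>] t, (z - t)⁻¹ * (‖(a z - b z)⁺‖ - ‖(a t - b t)⁺‖) < r := by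
  have hr0 : 0 < r := (mul_nonneg K.2 (norm_nonneg _)).trans_lt hr
  have hle : a t ≤ b t + fun _ => ‖(a t - b t)⁺‖ := fun i =>
    sub_le_iff_le_add'.1 (apply_le_norm_posPart (a t - b t) i)
  have htop (i : ι) (hi : (a t - b t) i = ‖(a t - b t)⁺‖) : (f (a t) - f (b t)) i < r :=
    (hq.sub_apply_le hf (norm_nonneg _) hbA hbA' hle (sub_eq_iff_eq_add'.1 hi)).trans_lt hr
  filter_upwards [eventually_norm_posPart_lt (ha.sub hb) hr0 htop, self_mem_nhdsWithin]
    with z hz hzt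
  rw [inv_mul_lt_iff₀ (sub_pos.2 hzt), mul_comm]
  exact sub_lt_iff_lt_add'.2 hz

theorem Quasimonotone.le_of_le (hq : Quasimonotone f) (hf : LocallyLipschitz f)
    (ha : IsIntegralCurveOn a (fun _ => f) (Icc s t))
    (hb : IsIntegralCurveOn b (fun _ => f) (Icc s t)) (hab : a s ≤ b s) :
    ∀ z ∈ Icc s t, a z ≤ b z := by
  set g : ℝ → ℝ := fun z => ‖(a z - b z)⁺‖
  have hg : ContinuousOn g (Icc s t) :=
    ((ha.continuousOn.sub hb.continuousOn).sup continuousOn_const).norm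
  have hg0 : g s ≤ 0 := by simp [g, posPart_eq_zero.2 (sub_nonpos.2 hab)]
  obtain ⟨K, hK⟩ := hf.locallyLipschitzOn.exists_lipschitzOnWith_of_compact
    ((isCompact_Icc.image_of_continuousOn hb.continuousOn).union
      (isCompact_Icc.image_of_continuousOn
        (hb.continuousOn.add (continuousOn_pi.2 fun _ : ι => hg))))
  have hgrowth (z : ℝ) (hz : z ∈ Ico s t) (r : ℝ) (hr : K * g z < r) :
      ∃ᶠ y in 𝓝[>] z, (y - z)⁻¹ * (g y - g z) < r := by
    have hzmem := Ico_subset_Icc_self hz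
    have hnhds : Icc s t ∈ 𝓝[>] z :=
      mem_of_superset (Ioo_mem_nhdsGT hz.2) fun y hy => ⟨hz.1.trans hy.1.le, hy.2.le⟩
    exact (hq.eventually_slope_norm_posPart_sub_lt hK ((ha z hzmem).mono_of_mem_nhdsWithin hnhds)
      ((hb z hzmem).mono_of_mem_nhdsWithin hnhds) (.inl ⟨z, hzmem, rfl⟩)
      (.inr ⟨z, hzmem, rfl⟩) hr).frequently
  intro z hz
  have hgronwall := le_gronwallBound_of_liminf_deriv_right_le hg hgrowth hg0
    (fun z _ => (add_zero _).ge) z hz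
  rw [gronwallBound_ε0_δ0] at hgronwall
  simpa [g, sub_nonpos] using hgronwall

theorem Quasimonotone.sup_le_of_sup_le (hq : Quasimonotone f) (hf : LocallyLipschitz f)
    (ha : IsIntegralCurveOn a (fun _ => f) (Icc s t))
    (hb : IsIntegralCurveOn b (fun _ => f) (Icc s t))
    (hu : IsIntegralCurveOn u (fun _ => f) (Icc s t)) (h : a s ⊔ b s ≤ u s) :
    ∀ z ∈ Icc s t, a z ⊔ b z ≤ u z := fun z hz =>
  sup_le (hq.le_of_le hf ha hu (sup_le_iff.1 h).1 z hz)
    (hq.le_of_le hf hb hu (sup_le_iff.1 h).2 z hz)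

theorem Quasimonotone.le_inf_of_le_inf (hq : Quasimonotone f) (hf : LocallyLipschitz f)
    (ha : IsIntegralCurveOn a (fun _ => f) (Icc s t))
    (hb : IsIntegralCurveOn b (fun _ => f) (Icc s t))
    (hl : IsIntegralCurveOn l (fun _ => f) (Icc s t)) (h : l s ≤ a s ⊓ b s) :
    ∀ z ∈ Icc s t, l z ≤ a z ⊓ b z := fun z hz =>
  le_inf (hq.le_of_le hf hl ha (le_inf_iff.1 h).1 z hz)
    (hq.le_of_le hf hl hb (le_inf_iff.1 h).2 z hz)

/-- The order distance associated with `H`: the increment of `H` across the order interval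
spanned by `x` and `y`. -/
def orderGap {α : Type*} [Lattice α] (H : α → ℝ) (x y : α) : ℝ := H (x ⊔ y) - H (x ⊓ y)

/-- A continuous function which is constant along the integral curves of `f` and increases along
the order at a rate of at least `m > 0`. -/
structure IsCoerciveFirstIntegral (f : (ι → ℝ) → ι → ℝ) (H : (ι → ℝ) → ℝ) (m : ℝ) : Prop where
  continuous : Continuous H
  pos : 0 < m
  growth : ∀ ⦃x y⦄, x ≤ y → m * ‖y - x‖ ≤ H y - H x
  conserved : ∀ ⦃γ s t⦄, s ≤ t → IsIntegralCurveOn γ (fun _ => f) (Icc s t) → H (γ t) = H (γ s)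

@[simp]
theorem orderGap_self {α : Type*} [Lattice α] (H : α → ℝ) (x : α) : orderGap H x x = 0 := by
  simp [orderGap]

namespace IsCoerciveFirstIntegral

variable {H : (ι → ℝ) → ℝ} {m : ℝ} {x y : ι → ℝ}

theorem monotone (hH : IsCoerciveFirstIntegral f H m) : Monotone H := fun _ _ hxy =>
  sub_nonneg.1 ((mul_nonneg hH.pos.le (norm_nonneg _)).trans (hH.growth hxy))

theorem eq_of_le_of_le (hH : IsCoerciveFirstIntegral f H m) (hxy : x ≤ y) (hyx : H y ≤ H x) :
    x = y := by
  have hnorm : m * ‖y - x‖ ≤ 0 := (hH.growth hxy).trans (sub_nonpos.2 hyx)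
  exact (sub_eq_zero.1 (norm_le_zero_iff.1 (nonpos_of_mul_nonpos_right hnorm hH.pos))).symm

theorem mul_norm_sub_le_orderGap (hH : IsCoerciveFirstIntegral f H m) (x y : ι → ℝ) :
    m * ‖x - y‖ ≤ orderGap H x y := by
  simpa only [orderGap, sup_sub_inf_eq_abs_sub, norm_abs_eq_norm, norm_sub_rev] using
    hH.growth (inf_le_sup (a := x) (b := y))

theorem continuous_orderGap (hH : IsCoerciveFirstIntegral f H m) :
    Continuous fun p : (ι → ℝ) × (ι → ℝ) => orderGap H p.1 p.2 :=
  (hH.continuous.comp (continuous_fst.sup continuous_snd)).sub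
    (hH.continuous.comp (continuous_fst.inf continuous_snd))

theorem orderGap_le_of_le (hH : IsCoerciveFirstIntegral f H m) (hq : Quasimonotone f)
    (hf : LocallyLipschitz f) (ha : IsIntegralCurveOn a (fun _ => f) (Icc s t))
    (hb : IsIntegralCurveOn b (fun _ => f) (Icc s t))
    (hl : IsIntegralCurveOn l (fun _ => f) (Icc s t))
    (hu : IsIntegralCurveOn u (fun _ => f) (Icc s t))
    (hlab : l s ≤ a s ⊓ b s) (habu : a s ⊔ b s ≤ u s) {z : ℝ} (hz : z ∈ Icc s t) :
    orderGap H (a z) (b z) ≤ H (u s) - H (l s) := by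
  rw [← hH.conserved hz.1 (hu.mono (Icc_subset_Icc_right hz.2)),
    ← hH.conserved hz.1 (hl.mono (Icc_subset_Icc_right hz.2))]
  exact sub_le_sub (hH.monotone (hq.sup_le_of_sup_le hf ha hb hu habu z hz))
    (hH.monotone (hq.le_inf_of_le_inf hf ha hb hl hlab z hz))

theorem antitoneOn_orderGap (hH : IsCoerciveFirstIntegral f H m) (hq : Quasimonotone f)
    (hf : LocallyLipschitz f) {I : Set ℝ} (hI : I.OrdConnected)
    (ha : IsIntegralCurveOn a (fun _ => f) I) (hb : IsIntegralCurveOn b (fun _ => f) I) :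
    AntitoneOn (fun t => orderGap H (a t) (b t)) I := by
  intro s hs t ht hst
  replace ha := ha.mono (hI.out hs ht)
  replace hb := hb.mono (hI.out hs ht)
  have hclosed : IsClosed ({z | orderGap H (a z) (b z) ≤ orderGap H (a s) (b s)} ∩ Icc s t) := by
    rw [inter_comm]
    exact (hH.continuous_orderGap.comp_continuousOn
      (ha.continuousOn.prodMk hb.continuousOn)).preimage_isClosed_of_isClosed
        isClosed_Icc isClosed_Iic
  refine hclosed.Icc_subset_of_forall_mem_nhdsWithin (le_refl (orderGap H _ _))
    (fun z ⟨hzs, hz⟩ => ?_) (right_mem_Icc.2 hst)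
  obtain ⟨r, hr, u, l, hu0, hl0, hu, hl⟩ :=
    exists_pair_isIntegralCurveOn_Icc hf hz.2 (a z ⊔ b z) (a z ⊓ b z)
  have hzr : Icc z r ⊆ Icc s t := Icc_subset_Icc hz.1 hr.2
  filter_upwards [Ioo_mem_nhdsGT hr.1] with y hy
  calc orderGap H (a y) (b y) ≤ H (u z) - H (l z) :=
        hH.orderGap_le_of_le hq hf (ha.mono hzr) (hb.mono hzr) hl hu hl0.le hu0.ge
          (Ioo_subset_Icc_self hy)
    _ = orderGap H (a z) (b z) := by rw [hu0, hl0, orderGap]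
    _ ≤ orderGap H (a s) (b s) := hzs

theorem apply_lt_of_lt (hH : IsCoerciveFirstIntegral f H m) (hq : Quasimonotone f)
    (hsq : StrictQuasimonotone f) (hf : LocallyLipschitz f) (hst : s < t)
    (ha : IsIntegralCurveOn a (fun _ => f) (Icc s t))
    (hb : IsIntegralCurveOn b (fun _ => f) (Icc s t)) (hab : a s < b s) (i : ι) :
    a t i < b t i := by
  have hle := hq.le_of_le hf ha hb hab.le
  have ht : t ∈ Icc s t := right_mem_Icc.2 hst.le
  have hne : a t ≠ b t := fun h => hab.ne <| hH.eq_of_le_of_le hab.le <| by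
    rw [← hH.conserved hst.le ha, ← hH.conserved hst.le hb, h]
  by_contra hi
  obtain ⟨j, hj, hlt⟩ := hsq (lt_of_le_of_ne (hle t ht) hne) ⟨i, (hle t ht i).eq_of_not_lt hi⟩
  have hderiv : HasDerivWithinAt (fun z => b z j - a z j) (f (b t) j - f (a t) j) (Ico s t) t :=
    ((hasDerivWithinAt_pi.1 (hb t ht) j).sub (hasDerivWithinAt_pi.1 (ha t ht) j)).mono
      Ico_subset_Icc_self
  rw [hasDerivWithinAt_iff_tendsto_slope' (by simp), nhdsWithin_Ico_eq_nhdsLT hst] at hderiv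
  refine (sub_pos.2 hlt).not_ge (le_of_tendsto hderiv ?_)
  filter_upwards [Ioo_mem_nhdsLT hst] with z hz
  rw [slope_def_field, hj, sub_self, sub_zero]
  exact div_nonpos_of_nonneg_of_nonpos (sub_nonneg.2 (hle z (Ioo_subset_Icc_self hz) j))
    (sub_nonpos.2 hz.2.le)

theorem le_or_le_of_orderGap_le (hH : IsCoerciveFirstIntegral f H m) (hq : Quasimonotone f)
    (hsq : StrictQuasimonotone f) (hf : LocallyLipschitz f) (hst : s < t)
    (ha : IsIntegralCurveOn a (fun _ => f) (Icc s t))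
    (hb : IsIntegralCurveOn b (fun _ => f) (Icc s t))
    (hgap : orderGap H (a s) (b s) ≤ orderGap H (a t) (b t)) : a s ≤ b s ∨ b s ≤ a s := by
  obtain ⟨r, hr, u, l, hu0, hl0, hu, hl⟩ :=
    exists_pair_isIntegralCurveOn_Icc hf hst (a s ⊔ b s) (a s ⊓ b s)
  have har := ha.mono (Icc_subset_Icc_right hr.2)
  have hbr := hb.mono (Icc_subset_Icc_right hr.2)
  have hr' : r ∈ Icc s r := right_mem_Icc.2 hr.1.le
  have hsup : a r ⊔ b r ≤ u r := hq.sup_le_of_sup_le hf har hbr hu hu0.ge r hr'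
  have hinf : l r ≤ a r ⊓ b r := hq.le_inf_of_le_inf hf har hbr hl hl0.le r hr'
  have hu_eq : a r ⊔ b r = u r := by
    have hdecr : orderGap H (a s) (b s) ≤ H (a r ⊔ b r) - H (a r ⊓ b r) :=
      hgap.trans (hH.antitoneOn_orderGap hq hf ordConnected_Icc ha hb (Ioc_subset_Icc_self hr)
        (right_mem_Icc.2 hst.le) hr.2)
    have hconst : H (u r) - H (l r) = orderGap H (a s) (b s) := by
      rw [hH.conserved hr.1.le hu, hH.conserved hr.1.le hl, hu0, hl0, orderGap]
    refine hH.eq_of_le_of_le hsup ?_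
    linarith [hH.monotone hinf]
  by_contra! hnot
  have hau : a s < u s := hu0 ▸ left_lt_sup.2 hnot.2
  have hbu : b s < u s := hu0 ▸ right_lt_sup.2 hnot.1
  obtain ⟨i, -⟩ := not_forall.1 hnot.1
  exact (max_lt (hH.apply_lt_of_lt hq hsq hf hr.1 har hu hau i)
    (hH.apply_lt_of_lt hq hsq hf hr.1 hbr hu hbu i)).ne (congrFun hu_eq i)

theorem mul_norm_comp_add_sub_le_orderGap (hH : IsCoerciveFirstIntegral f H m)
    (hq : Quasimonotone f) (hf : LocallyLipschitz f) {r : ℝ} (hr : 0 ≤ r) (hs : 0 ≤ s)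
    (ha : IsIntegralCurveOn a (fun _ => f) (Icc 0 (r + s))) :
    m * ‖a (r + s) - a r‖ ≤ orderGap H (a s) (a 0) := by
  have hshift : IsIntegralCurveOn (fun t => a (t + s)) (fun _ => f) (Icc 0 r) :=
    isIntegralCurveOn_comp_add_of_mapsTo ha fun t ht =>
      ⟨add_nonneg ht.1 hs, add_le_add_left ht.2 s⟩
  have hanti := hH.antitoneOn_orderGap hq hf ordConnected_Icc hshift
    (ha.mono (Icc_subset_Icc_right (le_add_of_nonneg_right hs)))
    (left_mem_Icc.2 hr) (right_mem_Icc.2 hr) hr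
  exact (hH.mul_norm_sub_le_orderGap _ _).trans (by simpa using hanti)

/-- Comparing a solution with its translates by at most `ε`, the time of existence of a local
solution `γ`, shows that the solution moves by a bounded amount during each time span `ε`. -/
theorem norm_sub_le_mul_of_isIntegralCurveOn (hH : IsCoerciveFirstIntegral f H m)
    (hq : Quasimonotone f) (hf : LocallyLipschitz f) {γ : ℝ → ι → ℝ} {ε C : ℝ} (hε : 0 ≤ ε)
    (hγ : IsIntegralCurveOn γ (fun _ => f) (Icc 0 ε))
    (hC : ∀ s ∈ Icc 0 ε, orderGap H (γ s) (γ 0) ≤ C) (k : ℕ) (ht : t ∈ Icc 0 (k * ε))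
    (ha : IsIntegralCurveOn a (fun _ => f) (Icc 0 t)) (ha0 : a 0 = γ 0) :
    ‖a t - γ 0‖ ≤ k * (C / m) := by
  induction k generalizing t with
  | zero =>
    obtain rfl : t = 0 := by simpa using ht
    simp [ha0]
  | succ k ih =>
    obtain ⟨r, hr, s, hs, rfl⟩ : ∃ r ∈ Icc 0 (k * ε), ∃ s ∈ Icc 0 ε, r + s = t := by
      rw [Nat.cast_succ, add_one_mul, mem_Icc] at ht
      rcases le_total t ε with h | h
      · exact ⟨0, ⟨le_rfl, by positivity⟩, t, ⟨ht.1, h⟩, zero_add t⟩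
      · exact ⟨t - ε, ⟨sub_nonneg.2 h, by linarith⟩, ε, ⟨hε, le_rfl⟩, sub_add_cancel t ε⟩
    have hstart : EqOn a γ (Icc 0 s) := eqOn_Icc_of_isIntegralCurveOn hf
      (ha.mono (Icc_subset_Icc_right (le_add_of_nonneg_left hr.1)))
      (hγ.mono (Icc_subset_Icc_right hs.2)) ha0
    have hstep : ‖a (r + s) - a r‖ ≤ C / m := by
      rw [le_div_iff₀' hH.pos]
      refine (hH.mul_norm_comp_add_sub_le_orderGap hq hf hr.1 hs.1 ha).trans ?_
      rw [ha0, hstart (right_mem_Icc.2 hs.1)]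
      exact hC s hs
    calc ‖a (r + s) - γ 0‖ ≤ ‖a (r + s) - a r‖ + ‖a r - γ 0‖ := norm_sub_le_norm_sub_add_norm_sub ..
      _ ≤ C / m + k * (C / m) :=
        add_le_add hstep (ih hr (ha.mono (Icc_subset_Icc_right (le_add_of_nonneg_right hs.1))))
      _ = (k + 1 : ℕ) * (C / m) := by push_cast; ring

theorem exists_forall_norm_le (hH : IsCoerciveFirstIntegral f H m) (hq : Quasimonotone f)
    (hf : LocallyLipschitz f) (x : ι → ℝ) (T : ℝ) :
    ∃ R, ∀ t ∈ Icc 0 T, ∀ a, a 0 = x → IsIntegralCurveOn a (fun _ => f) (Icc 0 t) →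
      ‖a t‖ ≤ R := by
  obtain ⟨ε, hε, hlocal⟩ := exists_pos_forall_exists_isIntegralCurveOn_Icc hf ‖x‖
  obtain ⟨γ, rfl, hγ⟩ := hlocal 0 x le_rfl
  rw [zero_add] at hγ
  obtain ⟨C, hC⟩ := isCompact_Icc.exists_bound_of_continuousOn
    (hH.continuous_orderGap.comp_continuousOn (hγ.continuousOn.prodMk continuousOn_const))
  obtain ⟨k, hk⟩ := exists_nat_ge (T / ε)
  rw [div_le_iff₀ hε] at hk
  refine ⟨k * (C / m) + ‖γ 0‖, fun t ht a ha0 ha => ?_⟩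
  have hdrift := hH.norm_sub_le_mul_of_isIntegralCurveOn hq hf hε.le hγ
    (fun s hs => (Real.le_norm_self _).trans (hC s hs)) k ⟨ht.1, ht.2.trans hk⟩ ha ha0
  linarith [norm_le_norm_sub_add (a t) (γ 0)]

theorem exists_isIntegralCurveOn_Ici (hH : IsCoerciveFirstIntegral f H m) (hq : Quasimonotone f)
    (hf : LocallyLipschitz f) (x : ι → ℝ) :
    ∃ γ, γ 0 = x ∧ IsIntegralCurveOn γ (fun _ => f) (Ici 0) :=
  exists_isIntegralCurveOn_Ici_of_forall_Icc hf fun T hT =>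
    have ⟨_, hR⟩ := hH.exists_forall_norm_le hq hf x T
    exists_isIntegralCurveOn_Icc_of_forall_norm_le hf hR hT

section OmegaLimit

variable {γ δ : ℝ → ι → ℝ} {q : ι → ℝ}

theorem tendsto_comp_add (hH : IsCoerciveFirstIntegral f H m) (hq : Quasimonotone f)
    (hf : LocallyLipschitz f) (hγ : IsIntegralCurveOn γ (fun _ => f) (Ici 0))
    (hδ : IsIntegralCurveOn δ (fun _ => f) (Ici 0)) {l : Filter ℝ} (hl : l ≤ atTop)
    (hlim : Tendsto γ l (𝓝 (δ 0))) (hs : 0 ≤ s) :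
    Tendsto (fun t => γ (t + s)) l (𝓝 (δ s)) := by
  have hgap : Tendsto (fun t => orderGap H (γ t) (δ 0)) l (𝓝 0) := by
    simpa [Function.comp_def] using
      (hH.continuous_orderGap.tendsto (δ 0, δ 0)).comp (hlim.prodMk_nhds tendsto_const_nhds)
  have hbound : ∀ᶠ t in l, m * ‖γ (t + s) - δ s‖ ≤ orderGap H (γ t) (δ 0) := by
    filter_upwards [hl (eventually_ge_atTop 0)] with t ht
    have hshift : IsIntegralCurveOn (fun z => γ (z + t)) (fun _ => f) (Ici 0) :=
      isIntegralCurveOn_comp_add_of_mapsTo hγ fun z hz => add_nonneg hz ht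
    have hanti := hH.antitoneOn_orderGap hq hf ordConnected_Ici hshift hδ self_mem_Ici hs hs
    rw [add_comm t s]
    exact (hH.mul_norm_sub_le_orderGap _ _).trans (by simpa using hanti)
  refine tendsto_iff_norm_sub_tendsto_zero.2 (squeeze_zero' (.of_forall fun _ => norm_nonneg _)
    (hbound.mono fun t ht => (le_div_iff₀' hH.pos).2 ht) ?_)
  simpa using hgap.div_const m

/-- Both gaps are limits, along a filter finer than `atTop`, of the nonincreasing function
`t ↦ orderGap H (γ t) (γ (t + s))`. -/
theorem orderGap_le_orderGap_of_tendsto (hH : IsCoerciveFirstIntegral f H m)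
    (hq : Quasimonotone f) (hf : LocallyLipschitz f)
    (hγ : IsIntegralCurveOn γ (fun _ => f) (Ici 0))
    (hδ : IsIntegralCurveOn δ (fun _ => f) (Ici 0)) {l : Filter ℝ} [l.NeBot] (hl : l ≤ atTop)
    (hlim : Tendsto γ l (𝓝 (δ 0))) (hs : 0 ≤ s) (ht : 0 ≤ t) :
    orderGap H (δ 0) (δ s) ≤ orderGap H (δ t) (δ (t + s)) := by
  set g : ℝ → ℝ := fun z => orderGap H (γ z) (γ (z + s))
  have hanti : AntitoneOn g (Ici 0) := hH.antitoneOn_orderGap hq hf ordConnected_Ici hγ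
    (isIntegralCurveOn_comp_add_of_mapsTo hγ fun z hz => add_nonneg hz hs)
  have hglim {r : ℝ} (hr : 0 ≤ r) :
      Tendsto (fun z => g (z + r)) l (𝓝 (orderGap H (δ r) (δ (r + s)))) := by
    have hrs := hH.tendsto_comp_add hq hf hγ hδ hl hlim (add_nonneg hr hs)
    simp only [← add_assoc] at hrs
    exact (hH.continuous_orderGap.tendsto (δ r, δ (r + s))).comp
      ((hH.tendsto_comp_add hq hf hγ hδ hl hlim hr).prodMk_nhds hrs)
  refine ge_of_tendsto (hglim ht) ?_
  filter_upwards [hl (eventually_ge_atTop 0)] with z hz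
  have hg0 : Tendsto g l (𝓝 (orderGap H (δ 0) (δ s))) := by simpa using hglim le_rfl
  refine le_of_tendsto hg0 ?_
  filter_upwards [hl (eventually_ge_atTop (z + t))] with y hy
  exact hanti (add_nonneg hz ht) ((add_nonneg hz ht).trans hy) hy

theorem apply_eq_zero_of_mapClusterPt (hH : IsCoerciveFirstIntegral f H m)
    (hq : Quasimonotone f) (hsq : StrictQuasimonotone f) (hf : LocallyLipschitz f)
    (hγ : IsIntegralCurveOn γ (fun _ => f) (Ici 0)) {p : ι → ℝ} (hp : MapClusterPt p atTop γ) :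
    f p = 0 := by
  obtain ⟨δ, rfl, hδ⟩ := hH.exists_isIntegralCurveOn_Ici hq hf p
  obtain ⟨l, hl, hlim⟩ := mapClusterPt_iff_ultrafilter.1 hp
  have hconst : ∀ s ∈ Ici (0 : ℝ), δ s = δ 0 := by
    intro s hs
    have hshift : IsIntegralCurveOn (fun z => δ (z + s)) (fun _ => f) (Icc 0 1) :=
      isIntegralCurveOn_comp_add_of_mapsTo hδ fun z hz => add_nonneg hz.1 hs
    have hHs : H (δ s) = H (δ 0) := hH.conserved hs (hδ.mono Icc_subset_Ici_self)
    have hcomparable := hH.le_or_le_of_orderGap_le hq hsq hf zero_lt_one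
      (hδ.mono Icc_subset_Ici_self) hshift (by
        simpa using hH.orderGap_le_orderGap_of_tendsto hq hf hγ hδ hl hlim hs zero_le_one)
    rw [zero_add] at hcomparable
    rcases hcomparable with hle | hle
    · exact (hH.eq_of_le_of_le hle hHs.le).symm
    · exact hH.eq_of_le_of_le hle hHs.ge
  exact (uniqueDiffOn_Ici 0 0 self_mem_Ici).eq_deriv _ (hδ 0 self_mem_Ici)
    ((hasDerivWithinAt_const 0 (Ici 0) (δ 0)).congr hconst rfl)

theorem tendsto_of_mapClusterPt (hH : IsCoerciveFirstIntegral f H m)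
    (hq : Quasimonotone f) (hsq : StrictQuasimonotone f) (hf : LocallyLipschitz f)
    (hγ : IsIntegralCurveOn γ (fun _ => f) (Ici 0)) {p : ι → ℝ} (hp : MapClusterPt p atTop γ) :
    Tendsto γ atTop (𝓝 p) := by
  have hzero := hH.apply_eq_zero_of_mapClusterPt hq hsq hf hγ hp
  have hanti := hH.antitoneOn_orderGap hq hf ordConnected_Ici hγ (isIntegralCurveOn_const hzero _)
  refine Metric.tendsto_atTop.2 fun ε hε => ?_
  have hsmall : ∀ᶠ x in 𝓝 p, orderGap H x p < m * ε :=
    (hH.continuous_orderGap.comp (continuous_id.prodMk continuous_const)).continuousAt.eventually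
      (gt_mem_nhds (by simpa using mul_pos hH.pos hε))
  obtain ⟨t, htε, ht⟩ := ((hp.frequently hsmall).and_eventually (eventually_ge_atTop 0)).exists
  refine ⟨t, fun s hts => ?_⟩
  rw [dist_eq_norm]
  exact lt_of_mul_lt_mul_left (((hH.mul_norm_sub_le_orderGap _ _).trans
    (hanti ht (ht.trans hts) hts)).trans_lt htε) hH.pos.le

theorem exists_mapClusterPt_of_apply_eq_zero (hH : IsCoerciveFirstIntegral f H m)
    (hq : Quasimonotone f) (hf : LocallyLipschitz f)
    (hγ : IsIntegralCurveOn γ (fun _ => f) (Ici 0)) {p : ι → ℝ} (hp : f p = 0) :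
    ∃ q, MapClusterPt q atTop γ := by
  have hanti := hH.antitoneOn_orderGap hq hf ordConnected_Ici hγ (isIntegralCurveOn_const hp _)
  have hbounded : ∀ᶠ t in atTop, γ t ∈ Metric.closedBall p (orderGap H (γ 0) p / m) := by
    filter_upwards [eventually_ge_atTop 0] with t ht
    rw [mem_closedBall_iff_norm, le_div_iff₀' hH.pos]
    exact (hH.mul_norm_sub_le_orderGap _ _).trans (hanti self_mem_Ici ht ht)
  obtain ⟨q, -, hq⟩ := (isCompact_closedBall p _).exists_mapClusterPt
    (tendsto_principal.2 hbounded)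
  exact ⟨q, hq⟩

theorem setOf_mapClusterPt_eq_singleton (hH : IsCoerciveFirstIntegral f H m)
    (hq : Quasimonotone f) (hsq : StrictQuasimonotone f) (hf : LocallyLipschitz f)
    (hγ : IsIntegralCurveOn γ (fun _ => f) (Ici 0)) {p : ι → ℝ} (hp : MapClusterPt p atTop γ) :
    {q | MapClusterPt q atTop γ} = {p} :=
  eq_singleton_iff_unique_mem.2 ⟨hp, fun _ (hq' : MapClusterPt _ atTop γ) =>
    have := hq'.clusterPt.mono (hH.tendsto_of_mapClusterPt hq hsq hf hγ hp)
    eq_of_nhds_neBot this⟩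

theorem apply_lt_or_lt_of_apply_eq_zero (hH : IsCoerciveFirstIntegral f H m)
    (hq : Quasimonotone f) (hsq : StrictQuasimonotone f) (hf : LocallyLipschitz f)
    {y z : ι → ℝ} (hy : f y = 0) (hz : f z = 0) (hyz : y ≠ z) :
    (∀ i, y i < z i) ∨ ∀ i, z i < y i := by
  have hy' := isIntegralCurveOn_const hy (Icc 0 1)
  have hz' := isIntegralCurveOn_const hz (Icc 0 1)
  rcases hH.le_or_le_of_orderGap_le hq hsq hf zero_lt_one hy' hz' le_rfl with hle | hle
  · exact .inl (hH.apply_lt_of_lt hq hsq hf zero_lt_one hy' hz' (hle.lt_of_ne hyz))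
  · exact .inr (hH.apply_lt_of_lt hq hsq hf zero_lt_one hz' hy' (hle.lt_of_ne hyz.symm))

end OmegaLimit

end IsCoerciveFirstIntegral

end Order

section Differentiable

variable {ι : Type*} [Fintype ι]

theorem eventually_lt_apply_add_smul {E : Type*} [NormedAddCommGroup E] [NormedSpace ℝ E]
    {g : E → ℝ} {L : E →L[ℝ] ℝ} {x v : E} (hg : HasFDerivAt g L x) (hv : 0 < L v) :
    ∀ᶠ s in 𝓝[>] (0 : ℝ), g x < g (x + s • v) := by
  filter_upwards [(hg.hasLineDerivAt v).tendsto_slope_zero_right.eventually (lt_mem_nhds hv),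
    self_mem_nhdsWithin] with s hs hs0
  exact sub_pos.1 ((smul_pos_iff_of_pos_left (inv_pos.2 hs0)).1 hs)

theorem map_eq_sum_smul_map_single [DecidableEq ι] {E : Type*} [NormedAddCommGroup E]
    [NormedSpace ℝ E] (L : (ι → ℝ) →L[ℝ] E) (v : ι → ℝ) :
    L v = ∑ j, v j • L (Pi.single j 1) := by
  conv_lhs => rw [pi_eq_sum_univ' v]
  simp only [map_sum, map_smul]

theorem mul_norm_le_map_of_le_map_single [DecidableEq ι] {L : (ι → ℝ) →L[ℝ] ℝ} {m : ℝ}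
    (hm : 0 ≤ m) (hL : ∀ i, m ≤ L (Pi.single i 1)) {v : ι → ℝ} (hv : 0 ≤ v) :
    m * ‖v‖ ≤ L v := by
  have hnorm : ‖v‖ ≤ ∑ i, v i :=
    (pi_norm_le_iff_of_nonneg (Finset.sum_nonneg fun i _ => hv i)).2 fun i =>
      (Real.norm_of_nonneg (hv i)).trans_le
        (Finset.single_le_sum (fun j _ => hv j) (Finset.mem_univ i))
  calc m * ‖v‖ ≤ m * ∑ i, v i := mul_le_mul_of_nonneg_left hnorm hm
    _ = ∑ i, v i * m := by rw [mul_comm, Finset.sum_mul]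
    _ ≤ ∑ i, v i * L (Pi.single i 1) :=
      Finset.sum_le_sum fun i _ => mul_le_mul_of_nonneg_left (hL i) (hv i)
    _ = L v := (map_eq_sum_smul_map_single L v).symm

theorem isCoerciveFirstIntegral_of_le_fderiv [DecidableEq ι] {f : (ι → ℝ) → ι → ℝ}
    {H : (ι → ℝ) → ℝ} {m : ℝ} (hH : Differentiable ℝ H) (hfi : ∀ x, fderiv ℝ H x (f x) = 0)
    (hm : 0 < m) (hg : ∀ x i, m ≤ fderiv ℝ H x (Pi.single i 1)) :
    IsCoerciveFirstIntegral f H m where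
  continuous := hH.continuous
  pos := hm
  growth x y hxy := by
    obtain ⟨z, -, hz⟩ := domain_mvt (x := x) (y := y)
      (fun w _ => (hH w).hasFDerivAt.hasFDerivWithinAt) convex_univ trivial trivial
    rw [hz]
    exact mul_norm_le_map_of_le_map_single hm.le (hg z) (sub_nonneg.2 hxy)
  conserved γ s t hst hγ := by
    have hderiv (z : ℝ) (hz : z ∈ Icc s t) : HasDerivWithinAt (H ∘ γ) 0 (Icc s t) z :=
      hfi (γ z) ▸ (hH (γ z)).hasFDerivAt.comp_hasDerivWithinAt z (hγ z hz)
    refine constant_of_has_deriv_right_zero (HasDerivWithinAt.continuousOn hderiv)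
      (fun z hz => ?_) t (right_mem_Icc.2 hst)
    exact (hderiv z (Ico_subset_Icc_self hz)).mono_of_mem_nhdsWithin (Icc_mem_nhdsGE_of_mem hz)

variable {n : ℕ} {f : (Fin n → ℝ) → Fin n → ℝ}

theorem coopVF.mul_fderiv_single_nonneg (hcoop : coopVF f univ) (x : Fin n → ℝ) {v : Fin n → ℝ}
    (hv : 0 ≤ v) {i : Fin n} (hi : v i = 0) (j : Fin n) :
    0 ≤ v j * fderiv ℝ f x (Pi.single j 1) i := by
  rcases eq_or_ne i j with rfl | hij
  · simp [hi]
  · exact mul_nonneg (hv j) (hcoop x trivial i j hij)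

theorem coopVF.quasimonotone (hf : Differentiable ℝ f) (hcoop : coopVF f univ) :
    Quasimonotone f := fun x y hxy i hi => by
  obtain ⟨z, -, hz⟩ := domain_mvt (f := fun w => f w i) (x := x) (y := y)
    (fun w _ => (hasFDerivAt_pi'.1 (hf w).hasFDerivAt i).hasFDerivWithinAt)
    convex_univ trivial trivial
  rw [← sub_nonneg, hz, map_eq_sum_smul_map_single]
  exact Finset.sum_nonneg fun j _ =>
    hcoop.mul_fderiv_single_nonneg z (sub_nonneg.2 hxy) (sub_eq_zero.2 hi.symm) j

theorem coopVF.strictQuasimonotone (hf : Differentiable ℝ f) (hcoop : coopVF f univ)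
    (hirr : ∀ x, matIrred (jacMat f x)) : StrictQuasimonotone f := fun x y hxy heq => by
  obtain ⟨i, hi : x i = y i, j, hj : x j ≠ y j, hij⟩ := hirr x {i | x i = y i} heq
    fun h => hxy.ne (funext (eq_univ_iff_forall.1 h))
  have hne : i ≠ j := fun h => hj (h ▸ hi)
  have hpos : 0 < fderiv ℝ f x (y - x) i := by
    rw [map_eq_sum_smul_map_single, Finset.sum_apply]
    refine Finset.sum_pos' (fun k _ => hcoop.mul_fderiv_single_nonneg x (sub_nonneg.2 hxy.le)
      (sub_eq_zero.2 hi.symm) k) ⟨j, Finset.mem_univ j, ?_⟩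
    exact mul_pos (sub_pos.2 ((hxy.le j).lt_of_ne hj)) ((hcoop x trivial i j hne).lt_of_ne' hij)
  obtain ⟨s, hlt, hs⟩ := ((eventually_lt_apply_add_smul
    (hasFDerivAt_pi'.1 (hf x).hasFDerivAt i) hpos).and (Ioo_mem_nhdsGT zero_lt_one)).exists
  refine ⟨i, hi, hlt.trans_le (hcoop.quasimonotone hf (fun k => ?_) (by simp [hi]))⟩
  have hk := mul_le_mul_of_nonneg_right hs.2.le (sub_nonneg.2 (hxy.le k))
  simp only [Pi.add_apply, Pi.smul_apply, Pi.sub_apply, smul_eq_mul]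
  linarith

end Differentiable

theorem isSolOn_univ_iff {n : ℕ} {f : (Fin n → ℝ) → Fin n → ℝ} {I : Set ℝ}
    {γ : ℝ → Fin n → ℝ} : IsSolOn f univ I γ ↔ IsIntegralCurveOn γ (fun _ => f) I :=
  and_iff_right fun _ _ => trivial

theorem omegaSet_univ {n : ℕ} (γ : ℝ → Fin n → ℝ) :
    omegaSet univ γ = {q | MapClusterPt q atTop γ} := by
  ext q
  constructor
  · rintro ⟨-, t, ht, hlim⟩
    exact .of_comp ht hlim.mapClusterPt
  · intro hq
    obtain ⟨t, hlim, ht⟩ := MapClusterPt.exists_seq_tendsto hq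
    exact ⟨trivial, t, ht, hlim⟩

theorem stmt_12_general {ι : Type*} [Fintype ι] {f : (ι → ℝ) → ι → ℝ} {H : (ι → ℝ) → ℝ} {m : ℝ}
    (hf : LocallyLipschitz f) (hq : Quasimonotone f) (hsq : StrictQuasimonotone f)
    (hH : IsCoerciveFirstIntegral f H m) :
    (∀ x, ∃ γ : ℝ → ι → ℝ, IsIntegralCurveOn γ (fun _ => f) (Ici 0) ∧ γ 0 = x) ∧
    Xor
      ((∀ γ : ℝ → ι → ℝ, IsIntegralCurveOn γ (fun _ => f) (Ici 0) →
          ∃ p, {q | MapClusterPt q atTop γ} = {p}) ∧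
        ∀ y z, f y = 0 → f z = 0 → y ≠ z → (∀ i, y i < z i) ∨ ∀ i, z i < y i)
      (∀ γ : ℝ → ι → ℝ, IsIntegralCurveOn γ (fun _ => f) (Ici 0) →
          {q | MapClusterPt q atTop γ} = ∅) := by
  have hexists (x : ι → ℝ) := hH.exists_isIntegralCurveOn_Ici hq hf x
  obtain ⟨γ₀, -, hγ₀⟩ := hexists 0
  refine ⟨fun x => (hexists x).imp fun _ => And.symm, ?_⟩
  by_cases hzero : ∃ p, f p = 0
  · obtain ⟨p, hp⟩ := hzero
    have hsingleton (γ) (hγ : IsIntegralCurveOn γ (fun _ => f) (Ici 0)) :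
        ∃ q, {q | MapClusterPt q atTop γ} = {q} :=
      (hH.exists_mapClusterPt_of_apply_eq_zero hq hf hγ hp).imp fun _ =>
        hH.setOf_mapClusterPt_eq_singleton hq hsq hf hγ
    obtain ⟨q, hq₀⟩ := hsingleton γ₀ hγ₀
    exact .inl ⟨⟨hsingleton, fun _ _ => hH.apply_lt_or_lt_of_apply_eq_zero hq hsq hf⟩, fun hempty =>
      singleton_ne_empty q (hq₀.symm.trans (hempty γ₀ hγ₀))⟩
  · have hempty (γ) (hγ : IsIntegralCurveOn γ (fun _ => f) (Ici 0)) :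
        {q | MapClusterPt q atTop γ} = ∅ := eq_empty_of_forall_notMem fun q hq' =>
      hzero ⟨q, hH.apply_eq_zero_of_mapClusterPt hq hsq hf hγ hq'⟩
    refine .inr ⟨hempty, fun ⟨hsingleton, _⟩ => ?_⟩
    obtain ⟨q, hq₀⟩ := hsingleton γ₀ hγ₀
    exact singleton_ne_empty q (hq₀.symm.trans (hempty γ₀ hγ₀))

/-- global dichotomy for cooperative irreducible systems on `ℝⁿ`
with a first integral whose partial derivatives are uniformly bounded between
two positive constants. -/
theorem stmt_12 {n : ℕ} {f : (Fin n → ℝ) → (Fin n → ℝ)} (hf : ContDiff ℝ 1 f)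
    (hcoop : coopVF f Set.univ) (hirr : ∀ x, matIrred (jacMat f x))
    {H : (Fin n → ℝ) → ℝ} (hH : ContDiff ℝ 1 H)
    (hfi : ∀ x, fderiv ℝ H x (f x) = 0)
    {m M : ℝ} (hm : 0 < m) (hmM : m ≤ M)
    (hg : ∀ x, ∀ i, m ≤ fderiv ℝ H x (Pi.single i 1) ∧
      fderiv ℝ H x (Pi.single i 1) ≤ M) :
    (∀ x, ∃ γ : ℝ → Fin n → ℝ, IsSolOn f Set.univ (Set.Ici 0) γ ∧ γ 0 = x) ∧
    Xor'
      ((∀ γ : ℝ → Fin n → ℝ, IsSolOn f Set.univ (Set.Ici 0) γ →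
          ∃ p : Fin n → ℝ, omegaSet Set.univ γ = {p}) ∧
        (∀ y z : Fin n → ℝ, f y = 0 → f z = 0 → y ≠ z → strLt y z ∨ strLt z y))
      (∀ γ : ℝ → Fin n → ℝ, IsSolOn f Set.univ (Set.Ici 0) γ →
          omegaSet Set.univ γ = ∅) := by
  have hf' : Differentiable ℝ f := hf.differentiable one_ne_zero
  simp only [isSolOn_univ_iff, omegaSet_univ]
  exact stmt_12_general hf.locallyLipschitz (hcoop.quasimonotone hf')
    (hcoop.strictQuasimonotone hf' hirr)
    (isCoerciveFirstIntegral_of_le_fderiv (hH.differentiable one_ne_zero) hfi hm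
      fun x i => (hg x i).1)
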